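/- Let n be a positive integer. Define q : (ℤ/2ℤ) × (ℤ/2nℤ) → ℚ/2ℤ by q(ā₁, ā₂) = a₁²/2 − a₂²/(2n) mod 2ℤ, on representatives a₁, a₂ (this is well defined). Then there exists a group automorphism f of (ℤ/2ℤ) × (ℤ/2nℤ) with q(f(x)) = −q(x) for all x if and only if 4 does not divide n and every odd prime divisor of n is congruent to 1 modulo 4. -/

import Mathlib

/-- The group `ℚ/2ℤ`. -/
abbrev QModTwo : Type := ℚ ⧸ AddSubgroup.zmultiples (2 : ℚ)

/-- The canonical projection `ℚ → ℚ/2ℤ`. -/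
noncomputable def toQ2 : ℚ →+ QModTwo := QuotientAddGroup.mk' _

/-- The discriminant form `q(a₁,a₂) = a₁²/2 - a₂²/(2n) mod 2ℤ` on `(ℤ/2ℤ) × (ℤ/2nℤ)`. -/
noncomputable def q18 (n : ℕ) (a : ZMod 2 × ZMod (2 * n)) : QModTwo :=
  toQ2 ((a.1.val : ℚ) ^ 2 / 2 - (a.2.val : ℚ) ^ 2 / (2 * (n : ℚ)))

/-!
Identify `(a₁, a₂)` with the class of `z = a₂ + a₁√n` in `ℤ[√n] / (2√n)`. Then
`q(z) = -N(z) / (2n)`, so multiplication by an element `β` of norm `≡ -1 (mod 4n)` negates `q`; it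
is invertible because the product of `β` and its negated conjugate is `-N(β) ≡ 1`. Conversely, the
image of `1` under any anti-automorphism is represented by such a `β`.

Elements of norm `≡ -1 (mod 4n)` exist iff `-1` is a square modulo `n`: if `b² + 1 = n s` with
`b ≢ n (mod 2)`, then `s ≡ 1 (mod 4)`, because `n` is a sum of two squares not divisible by `4`,
so `β = b + √n` works. Modulo an odd number, a square root of `-1` is lifted from the radical by
taking powers.
-/

lemma isSquare_neg_one_zmod_iff_exists_dvd {n : ℕ} :
    IsSquare (-1 : ZMod n) ↔ ∃ b : ℤ, (n : ℤ) ∣ b ^ 2 + 1 := by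
  have dvd_iff (b : ℤ) : (n : ℤ) ∣ b ^ 2 + 1 ↔ -1 = (b : ZMod n) * b := by
    rw [← ZMod.intCast_zmod_eq_zero_iff_dvd, eq_comm (a := -1), ← sq, ← add_eq_zero_iff_eq_neg]
    push_cast
    rfl
  simp only [dvd_iff, IsSquare, ZMod.intCast_surjective.exists]

lemma not_four_dvd_of_isSquare_neg_one {n : ℕ} (h : IsSquare (-1 : ZMod n)) : ¬ 4 ∣ n := fun h4 ↦
  (by decide : ¬ IsSquare (-1 : ZMod 4)) (ZMod.isSquare_neg_one_of_dvd h4 h)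

lemma isSquare_neg_one_zmod_pow {m : ℕ} (hm : Odd m) (h : IsSquare (-1 : ZMod m)) (k : ℕ) :
    IsSquare (-1 : ZMod (m ^ k)) := by
  obtain ⟨b, hb⟩ := isSquare_neg_one_zmod_iff_exists_dvd.mp h
  have lift : (m : ℤ) ^ (k + 1) ∣ (b ^ 2) ^ m ^ k - (-1) ^ m ^ k :=
    dvd_sub_pow_of_dvd_sub (by rwa [sub_neg_eq_add]) k
  rw [hm.pow.neg_one_pow, sub_neg_eq_add, pow_right_comm] at lift
  refine isSquare_neg_one_zmod_iff_exists_dvd.mpr ⟨b ^ m ^ k, ?_⟩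
  exact_mod_cast (pow_dvd_pow _ k.le_succ).trans lift

lemma isSquare_neg_one_zmod_of_odd {n : ℕ} (hn : Odd n)
    (h : ∀ p ∈ n.primeFactors, p % 4 ≠ 3) : IsSquare (-1 : ZMod n) := by
  have hrad : IsSquare (-1 : ZMod (UniqueFactorizationMonoid.radical n)) := by
    rw [ZMod.isSquare_neg_one_iff_forall_mem_primeFactors_mod_four_ne_three
      UniqueFactorizationMonoid.squarefree_radical, Nat.primeFactors_radical]
    exact h
  have hodd : Odd (UniqueFactorizationMonoid.radical n) :=
    hn.of_dvd_nat UniqueFactorizationMonoid.radical_dvd_self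
  exact ZMod.isSquare_neg_one_of_dvd (Nat.dvd_radical_pow_self hn.pos.ne')
    (isSquare_neg_one_zmod_pow hodd hrad n)

theorem isSquare_neg_one_zmod_iff {n : ℕ} : IsSquare (-1 : ZMod n) ↔
    ¬ 4 ∣ n ∧ ∀ p : ℕ, p.Prime → Odd p → p ∣ n → p % 4 = 1 := by
  constructor
  · refine fun h ↦ ⟨not_four_dvd_of_isSquare_neg_one h, fun p hp hodd hpn ↦ ?_⟩
    have : Fact p.Prime := ⟨hp⟩
    have := ZMod.exists_sq_eq_neg_one_iff.mp (ZMod.isSquare_neg_one_of_dvd hpn h)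
    have := Nat.odd_iff.mp hodd
    omega
  · rintro ⟨h4, hp⟩
    have of_odd_dvd {m : ℕ} (hm : Odd m) (hmn : m ∣ n) : IsSquare (-1 : ZMod m) := by
      refine isSquare_neg_one_zmod_of_odd hm fun p hpm ↦ ?_
      obtain ⟨hprime, hpm, -⟩ := Nat.mem_primeFactors.mp hpm
      have := hp p hprime (hm.of_dvd_nat hpm) (hpm.trans hmn)
      omega
    obtain ⟨m, rfl | rfl⟩ := Nat.even_or_odd' n
    · have hm : Odd m := Nat.odd_iff.mpr (by omega)
      exact ZMod.isSquare_neg_one_mul (Nat.coprime_two_left.mpr hm) (by decide)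
        (of_odd_dvd hm (dvd_mul_left m 2))
    · exact of_odd_dvd (odd_two_mul_add_one m) dvd_rfl

lemma mod_four_eq_one_or_mod_eight_eq_two_of_isSquare_neg_one {n : ℕ} (h : IsSquare (-1 : ZMod n)) :
    n % 4 = 1 ∨ n % 8 = 2 := by
  have h4 := not_four_dvd_of_isSquare_neg_one h
  obtain ⟨x, y, rfl⟩ := Nat.eq_sq_add_sq_of_isSquare_mod_neg_one h
  have sq_mod (t : ℕ) : t ^ 2 % 8 = 0 ∨ t ^ 2 % 8 = 1 ∨ t ^ 2 % 8 = 4 := by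
    have : t % 8 < 8 := Nat.mod_lt _ (by norm_num)
    rw [Nat.pow_mod]
    interval_cases t % 8 <;> simp
  have := sq_mod x
  have := sq_mod y
  omega

lemma exists_even_dvd_sq_add_one {n : ℕ} (hn : Odd n) (h : IsSquare (-1 : ZMod n)) :
    ∃ b : ℤ, Even b ∧ (n : ℤ) ∣ b ^ 2 + 1 := by
  obtain ⟨b, hb⟩ := isSquare_neg_one_zmod_iff_exists_dvd.mp h
  rcases Int.even_or_odd b with hb_even | hb_odd
  · exact ⟨b, hb_even, hb⟩
  · refine ⟨b + n, hb_odd.add_odd (mod_cast hn), ?_⟩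
    rw [show (b + n) ^ 2 + 1 = b ^ 2 + 1 + n * (2 * b + n) by ring]
    exact hb.add (dvd_mul_right _ _)

lemma sq_add_one_modEq_self_of_even {n : ℕ} {b : ℤ} (hn : n % 4 = 1) (hb : Even b)
    (h : (n : ℤ) ∣ b ^ 2 + 1) : b ^ 2 + 1 ≡ n [ZMOD 4 * n] := by
  obtain ⟨s, hs⟩ := h
  obtain ⟨c, rfl⟩ := hb.two_dvd
  have hs4 : s ≡ 1 [ZMOD 4] := calc
    s = 1 * s := (one_mul s).symm
    _ ≡ n * s [ZMOD 4] := Int.ModEq.mul_right s (by rw [Int.ModEq]; omega)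
    _ = 1 + 4 * c ^ 2 := by linarith
    _ ≡ 1 [ZMOD 4] := by simp [Int.ModEq]
  simpa [hs, mul_comm (4 : ℤ)] using hs4.mul_left' (c := n)

lemma sq_add_one_modEq_self_of_mod_eight {n : ℕ} {b : ℤ} (hn : n % 8 = 2)
    (h : (n : ℤ) ∣ b ^ 2 + 1) : b ^ 2 + 1 ≡ n [ZMOD 4 * n] := by
  obtain ⟨s, hs⟩ := h
  have hb : Odd b := by
    have : Even (b ^ 2 + 1) := hs ▸ (Int.even_iff.mpr (by omega : (n : ℤ) % 2 = 0)).mul_right s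
    exact (Int.odd_pow' two_ne_zero).mp (by simpa [Int.even_add_one] using this)
  have h2s : 2 * s ≡ 2 * 1 [ZMOD 2 * 4] := calc
    2 * s ≡ n * s [ZMOD 8] := Int.ModEq.mul_right s (by rw [Int.ModEq]; omega)
    _ = b ^ 2 + 1 := hs.symm
    _ ≡ 1 + 1 [ZMOD 8] :=
      (Int.modEq_iff_dvd.mpr (Int.eight_dvd_sq_sub_one_of_odd hb)).symm.add_right 1
  have hs4 : s ≡ 1 [ZMOD 4] := h2s.mul_left_cancel' two_ne_zero
  simpa [hs, mul_comm (4 : ℤ)] using hs4.mul_left' (c := n)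

theorem exists_sq_add_one_modEq_self {n : ℕ} (h : IsSquare (-1 : ZMod n)) :
    ∃ b : ℤ, b ^ 2 + 1 ≡ n [ZMOD 4 * n] := by
  rcases mod_four_eq_one_or_mod_eight_eq_two_of_isSquare_neg_one h with hn | hn
  · obtain ⟨b, hb, hdvd⟩ := exists_even_dvd_sq_add_one (Nat.odd_iff.mpr (by omega)) h
    exact ⟨b, sq_add_one_modEq_self_of_even hn hb hdvd⟩
  · obtain ⟨b, hdvd⟩ := isSquare_neg_one_zmod_iff_exists_dvd.mp h
    exact ⟨b, sq_add_one_modEq_self_of_mod_eight hn hdvd⟩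

lemma toQ2_intCast_div_eq_iff {d : ℕ} (hd : d ≠ 0) {u v : ℤ} :
    toQ2 (u / d) = toQ2 (v / d) ↔ u ≡ v [ZMOD 2 * d] := by
  rw [← AddCommGroup.modEq_iff_intModEq, ← AddCommGroup.intCast_modEq_intCast (G := ℚ)]
  push_cast
  rw [← AddCommGroup.div_modEq_div (Nat.cast_ne_zero.mpr hd)]
  exact AddCommGroup.modEq_iff_eq_mod_zmultiples.symm

section DiscriminantForm

open Zsqrtd

/-- The projection `y + x√n ↦ (x, y)` of `ℤ[√n]` onto the discriminant group, which identifies the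
latter with `ℤ[√n] / (2√n)`. -/
def discrProj (n : ℕ) : ℤ√(n : ℤ) →+ ZMod 2 × ZMod (2 * n) where
  toFun z := (z.im, z.re)
  map_zero' := by simp
  map_add' := by simp

variable {n : ℕ}

lemma discrProj_surjective : Function.Surjective (discrProj n) := by
  rintro ⟨x, y⟩
  obtain ⟨a, rfl⟩ := ZMod.intCast_surjective x
  obtain ⟨b, rfl⟩ := ZMod.intCast_surjective y
  exact ⟨⟨b, a⟩, rfl⟩

lemma discrProj_eq_zero_iff {z : ℤ√(n : ℤ)} : discrProj n z = 0 ↔ 2 * sqrtd ∣ z := by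
  have coords : discrProj n z = 0 ↔ (2 : ℤ) ∣ z.im ∧ ((2 * n : ℕ) : ℤ) ∣ z.re :=
    Prod.mk_eq_zero.trans <| and_congr
      (ZMod.intCast_zmod_eq_zero_iff_dvd z.im 2) (ZMod.intCast_zmod_eq_zero_iff_dvd z.re (2 * n))
  have mul_sqrtd (u : ℤ√(n : ℤ)) : 2 * sqrtd * u = ⟨(2 * n : ℕ) * u.im, 2 * u.re⟩ := by
    ext <;> simp [mul_comm (2 : ℤ)]
  rw [coords]
  constructor
  · rintro ⟨⟨c, hc⟩, ⟨d, hd⟩⟩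
    exact ⟨⟨c, d⟩, by rw [mul_sqrtd, ← hc, ← hd]⟩
  · rintro ⟨u, rfl⟩
    rw [mul_sqrtd]
    exact ⟨dvd_mul_right _ _, dvd_mul_right _ _⟩

lemma discrProj_eq_iff {z w : ℤ√(n : ℤ)} :
    discrProj n z = discrProj n w ↔ 2 * sqrtd ∣ z - w := by
  rw [← sub_eq_zero, ← map_sub, discrProj_eq_zero_iff]

lemma norm_modEq_of_discrProj_eq {z w : ℤ√(n : ℤ)} (h : discrProj n z = discrProj n w) :
    z.norm ≡ w.norm [ZMOD 4 * n] := by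
  obtain ⟨u, hu⟩ := discrProj_eq_iff.mp h
  obtain rfl : z = w + 2 * sqrtd * u := by rw [← hu, add_sub_cancel]
  refine (Int.modEq_iff_dvd.mpr
    ⟨w.re * u.im + n * u.im ^ 2 - w.im * u.re - u.re ^ 2, ?_⟩).symm
  simp only [norm_def, re_add, re_mul, re_ofNat, Nat.cast_ofNat, re_sqrtd, mul_zero, im_ofNat,
    im_sqrtd, mul_one, add_zero, zero_mul, im_mul, zero_add, im_add]
  ring

/-- The endomorphism of the discriminant group induced by multiplication by `β` on `ℤ[√n]`. -/
noncomputable def discrMul (β : ℤ√(n : ℤ)) : ZMod 2 × ZMod (2 * n) →+ ZMod 2 × ZMod (2 * n) :=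
  (discrProj n).liftOfSurjective discrProj_surjective
    ⟨(discrProj n).comp (AddMonoidHom.mulLeft β), fun _ hz ↦
      discrProj_eq_zero_iff.mpr ((discrProj_eq_zero_iff.mp hz).mul_left β)⟩

@[simp]
lemma discrMul_discrProj (β z : ℤ√(n : ℤ)) :
    discrMul β (discrProj n z) = discrProj n (β * z) :=
  AddMonoidHom.liftOfRightInverse_comp_apply ..

lemma discrMul_comp_eq_id {β γ : ℤ√(n : ℤ)} (h : discrProj n (β * γ) = discrProj n 1) :
    (discrMul β).comp (discrMul γ) = AddMonoidHom.id _ := by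
  ext1 x
  obtain ⟨z, rfl⟩ := discrProj_surjective x
  have hdvd : 2 * sqrtd ∣ β * γ * z - z := by
    simpa [sub_mul] using (discrProj_eq_iff.mp h).mul_right z
  simpa [← mul_assoc] using discrProj_eq_iff.mpr hdvd

lemma discrProj_mul_neg_star {β : ℤ√(n : ℤ)} (h : β.norm ≡ -1 [ZMOD 2 * n]) :
    discrProj n (β * -star β) = discrProj n 1 := by
  have two_sqrtd_dvd : (2 * sqrtd : ℤ√(n : ℤ)) ∣ ((2 * n : ℤ) : ℤ√(n : ℤ)) :=
    ⟨sqrtd, by rw [mul_assoc, dmuld]; push_cast; rfl⟩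
  have two_n_dvd : ((2 * n : ℤ) : ℤ√(n : ℤ)) ∣ ((-1 - β.norm : ℤ) : ℤ√(n : ℤ)) :=
    Int.cast_dvd_cast _ _ h.dvd
  rw [discrProj_eq_iff, mul_neg, ← norm_eq_mul_conj]
  convert! two_sqrtd_dvd.trans two_n_dvd using 1
  push_cast
  ring

/-- Multiplication by `β` as an automorphism of the discriminant group, when `N(β) ≡ -1 (mod 2n)`;
the inverse is multiplication by `-star β`. -/
noncomputable def discrMulEquiv (β : ℤ√(n : ℤ)) (h : β.norm ≡ -1 [ZMOD 2 * n]) :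
    (ZMod 2 × ZMod (2 * n)) ≃+ (ZMod 2 × ZMod (2 * n)) :=
  (discrMul β).toAddEquiv (discrMul (-star β))
    (discrMul_comp_eq_id (mul_comm β (-star β) ▸ discrProj_mul_neg_star h))
    (discrMul_comp_eq_id (discrProj_mul_neg_star h))

@[simp]
lemma discrMulEquiv_discrProj (β : ℤ√(n : ℤ)) (h : β.norm ≡ -1 [ZMOD 2 * n]) (z : ℤ√(n : ℤ)) :
    discrMulEquiv β h (discrProj n z) = discrProj n (β * z) :=
  discrMul_discrProj β z

lemma q18_discrProj (hn : n ≠ 0) (z : ℤ√(n : ℤ)) :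
    q18 n (discrProj n z) = toQ2 ((-z.norm : ℤ) / (2 * n : ℕ)) := by
  have : NeZero (2 * n) := ⟨by omega⟩
  let w : ℤ√(n : ℤ) := ⟨(discrProj n z).2.val, (discrProj n z).1.val⟩
  have hw : discrProj n w = discrProj n z := by
    ext <;> simp [w, discrProj]
  calc
    q18 n (discrProj n z) = toQ2 ((-w.norm : ℤ) / (2 * n : ℕ)) := by
      rw [q18]
      congr 1
      simp only [w, norm_def]
      push_cast
      field_simp
      ring
    _ = toQ2 ((-z.norm : ℤ) / (2 * n : ℕ)) := by
      rw [toQ2_intCast_div_eq_iff (NeZero.ne _)]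
      convert! (norm_modEq_of_discrProj_eq hw).neg using 1
      push_cast
      ring

lemma q18_discrProj_eq_neg_iff (hn : n ≠ 0) {z w : ℤ√(n : ℤ)} :
    q18 n (discrProj n w) = -q18 n (discrProj n z) ↔ w.norm ≡ -z.norm [ZMOD 4 * n] := by
  rw [q18_discrProj hn, q18_discrProj hn, ← map_neg, ← neg_div, ← Int.cast_neg,
    toQ2_intCast_div_eq_iff (by omega), ← Int.neg_modEq_neg, neg_neg]
  push_cast
  rw [← mul_assoc]
  norm_num

theorem exists_antiautomorphism_iff_exists_norm_modEq (hn : n ≠ 0) :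
    (∃ f : (ZMod 2 × ZMod (2 * n)) ≃+ (ZMod 2 × ZMod (2 * n)),
        ∀ x, q18 n (f x) = - q18 n x) ↔
      ∃ β : ℤ√(n : ℤ), β.norm ≡ -1 [ZMOD 4 * n] := by
  constructor
  · rintro ⟨f, hf⟩
    obtain ⟨β, hβ⟩ := discrProj_surjective (f (discrProj n 1))
    have := hf (discrProj n 1)
    rw [← hβ, q18_discrProj_eq_neg_iff hn, Zsqrtd.norm_one] at this
    exact ⟨β, this⟩
  · rintro ⟨β, hβ⟩
    refine ⟨discrMulEquiv β (hβ.of_dvd ⟨2, by ring⟩), discrProj_surjective.forall.mpr fun z ↦ ?_⟩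
    rw [discrMulEquiv_discrProj, q18_discrProj_eq_neg_iff hn, Zsqrtd.norm_mul]
    simpa using hβ.mul_right z.norm

theorem exists_norm_modEq_neg_one_iff :
    (∃ β : ℤ√(n : ℤ), β.norm ≡ -1 [ZMOD 4 * n]) ↔ IsSquare (-1 : ZMod n) := by
  constructor
  · rintro ⟨β, hβ⟩
    have hn : (n : ℤ) ∣ -1 - β.norm := (dvd_mul_left _ 4).trans hβ.dvd
    rw [isSquare_neg_one_zmod_iff_exists_dvd]
    refine ⟨β.re, ?_⟩
    convert! dvd_sub (dvd_mul_right (n : ℤ) (β.im ^ 2)) hn using 1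
    rw [norm_def]
    ring
  · intro h
    obtain ⟨b, hb⟩ := exists_sq_add_one_modEq_self h
    refine ⟨⟨b, 1⟩, ?_⟩
    simpa [norm_def, sq] using hb.sub_right (n + 1 : ℤ)

end DiscriminantForm

/-- for `n ≥ 1`, the form `q(a₁,a₂) = a₁²/2 - a₂²/(2n)` on
`(ℤ/2ℤ) × (ℤ/2nℤ)` admits an anti-automorphism iff `4 ∤ n` and every odd prime
divisor of `n` is `≡ 1 (mod 4)`. -/
theorem statement18 (n : ℕ) (hn : 0 < n) :
    (∃ f : (ZMod 2 × ZMod (2 * n)) ≃+ (ZMod 2 × ZMod (2 * n)),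
        ∀ x, q18 n (f x) = - q18 n x) ↔
      (¬ 4 ∣ n ∧ ∀ p : ℕ, p.Prime → Odd p → p ∣ n → p % 4 = 1) :=
  (exists_antiautomorphism_iff_exists_norm_modEq hn.ne').trans
    (exists_norm_modEq_neg_one_iff.trans isSquare_neg_one_zmod_iff)
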